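/- Fix p with 0 < p ≤ 1. There exist constants c_p, C_p > 0 depending only on p such that for every sequence a = (a_k)_{k∈ℤ} of complex numbers with ∑_{k∈ℤ} |a_k|^p < ∞: ‖a‖_{H_p(ℤ)} is finite if and only if ‖a‖_{H_p(ℤ)}^* is finite, and in this case c_p · ‖a‖_{H_p(ℤ)} ≤ ‖a‖_{H_p(ℤ)}^* ≤ C_p · ‖a‖_{H_p(ℤ)}. -/

import Mathlib

/-!
Both transforms belong to the family `T_z a (m) = ∑ k, a k / (m - k - z)`, `z ∈ ℂ` (with the
convention `1 / 0 = 0`): `H = T_0` and `H_c = T_{-1/2}`. Translating `z` by an integer only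
translates the sequence `T_z a`, so it does not change its `ℓ_p` quasinorm.

Let `s` be a finite set of nodes in `ℂ` and let `w_z` be the barycentric (Lagrange) weights of `s`.
The partial fraction expansion `∑ z ∈ s, w_z / (n - z) = ∏ z ∈ s, 1 / (n - z)` shows that the
convolution kernel `K` of `∑ z ∈ s, w_z T_z` is `O(|n| ^ (-#s))`. As soon as `p * #s > 1`, `K` lies
in `ℓ_p`, and since `p ≤ 1`, convolution with `K` is bounded on `ℓ_p`. Taking for `s` the point `x`
together with the points `y, y + 1, …, y + N - 1`, and solving for `T_x`, gives
`‖T_x a‖_p ≤ C (‖a‖_p + ‖T_y a‖_p)` whenever `x - y` is not an integer. This estimate for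
`(x, y) = (0, -1/2)` and for `(x, y) = (-1/2, 0)` gives the two inequalities.

The estimates are carried out in `ℝ≥0∞` for the `p`-th powers `∑ k, ‖b k‖ₑ ^ p`.
-/

open MeasureTheory Real

/-- The discrete Hilbert transform `H(a)_m = ∑_{k ≠ m} a_k / (m - k)`. -/
noncomputable def discHilbert (a : ℤ → ℂ) (m : ℤ) : ℂ :=
  ∑' k : ℤ, if k = m then 0 else a k / ((m : ℂ) - (k : ℂ))

/-- The shifted discrete Hilbert transform `H_c(a)_m = ∑_k a_k / (m - k + 1/2)`. -/
noncomputable def discHilbertC (a : ℤ → ℂ) (m : ℤ) : ℂ :=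
  ∑' k : ℤ, a k / ((m : ℂ) - (k : ℂ) + 1 / 2)

/-- The `ℓ_p(ℤ)` quasinorm, valued in `ℝ≥0∞`. -/
noncomputable def ellpNorm (p : ℝ) (b : ℤ → ℂ) : ENNReal :=
  (∑' k : ℤ, ENNReal.ofReal (‖b k‖ ^ p)) ^ (1 / p)

/-- The discrete Hardy space quasinorm `‖a‖_{H_p(ℤ)} = ‖a‖_{ℓ_p} + ‖H(a)‖_{ℓ_p}`. -/
noncomputable def hpNorm (p : ℝ) (a : ℤ → ℂ) : ENNReal :=
  ellpNorm p a + ellpNorm p (discHilbert a)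

/-- The variant quasinorm `‖a‖_{H_p(ℤ)}^* = ‖a‖_{ℓ_p} + ‖H_c(a)‖_{ℓ_p}`. -/
noncomputable def hpNormStar (p : ℝ) (a : ℤ → ℂ) : ENNReal :=
  ellpNorm p a + ellpNorm p (discHilbertC a)

open Filter Asymptotics
open scoped ENNReal

/-- The `p`-th power `∑ k, ‖b k‖ ^ p` of the `ℓ_p` quasinorm, valued in `ℝ≥0∞`. -/
noncomputable def lpPow (p : ℝ) (b : ℤ → ℂ) : ℝ≥0∞ := ∑' k : ℤ, ‖b k‖ₑ ^ p

/-- The transform with kernel `1 / (n - z)`; if `z` is an integer, the division by zero at `n = z`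
makes the singular term vanish. -/
noncomputable def shiftedHilbert (z : ℂ) (a : ℤ → ℂ) (m : ℤ) : ℂ :=
  ∑' k : ℤ, a k * (((m - k : ℤ) : ℂ) - z)⁻¹

lemma ellpNorm_eq (p : ℝ) (hp : 0 < p) (b : ℤ → ℂ) : ellpNorm p b = lpPow p b ^ (1 / p) := by
  unfold ellpNorm lpPow
  congr 2
  ext k
  rw [← ENNReal.ofReal_rpow_of_nonneg (norm_nonneg _) hp.le, ofReal_norm]

lemma discHilbert_eq (a : ℤ → ℂ) : discHilbert a = shiftedHilbert 0 a := by
  ext m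
  unfold discHilbert shiftedHilbert
  congr 1
  ext k
  split_ifs with h
  · simp [h]
  · simp [div_eq_mul_inv]

lemma discHilbertC_eq (a : ℤ → ℂ) : discHilbertC a = shiftedHilbert (-1 / 2) a := by
  ext m
  unfold discHilbertC shiftedHilbert
  congr 1
  ext k
  rw [div_eq_mul_inv]
  push_cast
  ring_nf

lemma lpPow_shiftedHilbert_add_int (p : ℝ) (z : ℂ) (j : ℤ) (a : ℤ → ℂ) :
    lpPow p (shiftedHilbert (z + j) a) = lpPow p (shiftedHilbert z a) := by
  unfold lpPow
  rw [← (Equiv.subRight j).tsum_eq (fun k => ‖shiftedHilbert z a k‖ₑ ^ p)]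
  congr 1
  ext m
  congr 2
  unfold shiftedHilbert
  congr 1
  ext k
  simp only [Equiv.subRight_apply]
  push_cast
  ring_nf

/-! ### Subadditivity of the `p`-th power for `p ≤ 1` -/

lemma rpow_finset_sum_le {ι : Type*} (p : ℝ) (hp0 : 0 < p) (hp1 : p ≤ 1) (s : Finset ι)
    (f : ι → ℝ≥0∞) : (∑ i ∈ s, f i) ^ p ≤ ∑ i ∈ s, f i ^ p :=
  Finset.le_sum_of_subadditive (fun x : ℝ≥0∞ => x ^ p) (by simp [hp0])
    (fun a b => ENNReal.rpow_add_le_add_rpow a b hp0.le hp1) s f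

lemma rpow_tsum_le {ι : Type*} (p : ℝ) (hp0 : 0 < p) (hp1 : p ≤ 1) (f : ι → ℝ≥0∞) :
    (∑' i, f i) ^ p ≤ ∑' i, f i ^ p := by
  rw [← ENNReal.le_rpow_inv_iff hp0]
  refine ENNReal.summable.tsum_le_of_sum_le fun s => ?_
  rw [ENNReal.le_rpow_inv_iff hp0]
  exact (rpow_finset_sum_le p hp0 hp1 s f).trans (ENNReal.sum_le_tsum s)

lemma summable_of_lpPow_ne_top (p : ℝ) (hp0 : 0 < p) (hp1 : p ≤ 1) (a : ℤ → ℂ)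
    (ha : lpPow p a ≠ ⊤) : Summable fun k => ‖a k‖ := by
  have h : ∑' k, ‖a k‖ₑ ≠ ⊤ := fun h => by
    have := rpow_tsum_le p hp0 hp1 fun k => ‖a k‖ₑ
    rw [h, ENNReal.top_rpow_of_pos hp0] at this
    exact ha (top_le_iff.1 this)
  simpa using ENNReal.summable_toReal h

/-- For `p ≤ 1`, convolution is bounded on `ℓ_p`. -/
lemma lpPow_convolution_le (p : ℝ) (hp0 : 0 < p) (hp1 : p ≤ 1) (a K : ℤ → ℂ) :
    lpPow p (fun m => ∑' k, a k * K (m - k)) ≤ lpPow p K * lpPow p a := by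
  calc lpPow p (fun m => ∑' k, a k * K (m - k))
      ≤ ∑' m, ∑' k, ‖a k‖ₑ ^ p * ‖K (m - k)‖ₑ ^ p := by
        refine ENNReal.tsum_le_tsum fun m => ?_
        calc ‖∑' k, a k * K (m - k)‖ₑ ^ p ≤ (∑' k, ‖a k * K (m - k)‖ₑ) ^ p :=
              ENNReal.rpow_le_rpow enorm_tsum_le_tsum_enorm hp0.le
          _ ≤ ∑' k, ‖a k * K (m - k)‖ₑ ^ p := rpow_tsum_le p hp0 hp1 _
          _ = _ := by
              congr 1
              ext k
              rw [enorm_mul, ENNReal.mul_rpow_of_nonneg _ _ hp0.le]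
    _ = ∑' k, ∑' m, ‖a k‖ₑ ^ p * ‖K (m - k)‖ₑ ^ p := ENNReal.tsum_comm
    _ = ∑' k, ‖a k‖ₑ ^ p * lpPow p K := by
        congr 1
        ext k
        rw [ENNReal.tsum_mul_left]
        congr 1
        exact (Equiv.subRight k).tsum_eq (fun m => ‖K m‖ₑ ^ p)
    _ = _ := by rw [ENNReal.tsum_mul_right, mul_comm]; rfl

/-! ### Decay of the kernels -/

lemma isBigO_inv_sub (z : ℂ) :
    (fun n : ℤ => ((n : ℂ) - z)⁻¹) =O[cofinite] fun n : ℤ => |(n : ℝ)|⁻¹ := by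
  have hev : ∀ᶠ n : ℤ in cofinite, 2 * ‖z‖ + 1 ≤ |(n : ℝ)| := by
    have := tendsto_norm_cocompact_atTop.comp Int.tendsto_coe_cofinite
    exact this.eventually_ge_atTop _
  refine IsBigO.of_bound 2 ?_
  filter_upwards [hev] with n hn
  have h1 : ‖(n : ℂ)‖ = |(n : ℝ)| := by simp
  have h2 := norm_sub_norm_le (n : ℂ) z
  have hz := norm_nonneg z
  rw [norm_inv, norm_inv, Real.norm_eq_abs, abs_abs, ← div_eq_mul_inv, inv_eq_one_div,
    div_le_div_iff₀ (by linarith) (by linarith)]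
  linarith

lemma exists_bound_inv_sub (z : ℂ) : ∃ C : ℝ, ∀ n : ℤ, ‖((n : ℂ) - z)⁻¹‖ ≤ C := by
  have h : (fun n : ℤ => ((n : ℂ) - z)⁻¹) =O[cofinite] fun _ : ℤ => (1 : ℝ) := by
    refine (isBigO_inv_sub z).trans (IsBigO.of_bound 1 (Eventually.of_forall fun n => ?_))
    rcases eq_or_ne n 0 with rfl | hn
    · simp
    · have : (1 : ℝ) ≤ |(n : ℝ)| := by exact_mod_cast Int.one_le_abs hn
      simpa using inv_le_one_of_one_le₀ this
  obtain ⟨C, hC⟩ := (isBigO_one_iff ℝ).1 h |>.bddAbove_range_of_cofinite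
  exact ⟨C, fun n => hC ⟨n, rfl⟩⟩

lemma summable_shiftedHilbert (z : ℂ) (a : ℤ → ℂ) (ha : Summable fun k => ‖a k‖) (m : ℤ) :
    Summable fun k : ℤ => a k * (((m - k : ℤ) : ℂ) - z)⁻¹ := by
  obtain ⟨C, hC⟩ := exists_bound_inv_sub z
  refine Summable.of_norm_bounded (ha.mul_right C) fun k => ?_
  rw [norm_mul]
  exact mul_le_mul_of_nonneg_left (hC _) (norm_nonneg _)

/-- The kernel `∑ z ∈ s, w_z / (n - z)` built from the barycentric weights of the node set `s`.
Away from the nodes it equals `∏ z ∈ s, 1 / (n - z)`. -/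
noncomputable def nodalKernel (s : Finset ℂ) (n : ℤ) : ℂ :=
  ∑ z ∈ s, Lagrange.nodalWeight s id z * ((n : ℂ) - z)⁻¹

lemma nodalKernel_eq_prod (s : Finset ℂ) (hs : s.Nonempty) (n : ℤ) (hn : ∀ z ∈ s, (n : ℂ) ≠ z) :
    nodalKernel s n = ∏ z ∈ s, ((n : ℂ) - z)⁻¹ := by
  -- Evaluate at `n` the interpolant of the constant function `1`.
  have h := Lagrange.eval_interpolate_not_at_node (s := s) (v := id) (x := (n : ℂ)) 1 hn
  rw [Lagrange.interpolate_one (Set.injOn_id _) hs] at h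
  simp only [Polynomial.eval_one, Pi.one_apply, mul_one, id, Lagrange.eval_nodal] at h
  rw [Finset.prod_inv_distrib]
  exact eq_inv_of_mul_eq_one_right h.symm

lemma isBigO_nodalKernel (s : Finset ℂ) (hs : s.Nonempty) :
    nodalKernel s =O[cofinite] fun n : ℤ => |(n : ℝ)|⁻¹ ^ s.card := by
  have h : (fun n : ℤ => ∏ z ∈ s, ((n : ℂ) - z)⁻¹) =O[cofinite]
      fun n : ℤ => ∏ _z ∈ s, |(n : ℝ)|⁻¹ :=
    IsBigO.finsetProd fun z _ => isBigO_inv_sub z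
  simp only [Finset.prod_const] at h
  refine IsBigO.congr' h ?_ EventuallyEq.rfl
  have hfin : {n : ℤ | (n : ℂ) ∈ s}.Finite :=
    s.finite_toSet.preimage (Int.cast_injective.injOn)
  filter_upwards [hfin.compl_mem_cofinite] with n hn
  exact (nodalKernel_eq_prod s hs n fun z hz h => hn (by simpa [h] using hz)).symm

lemma lpPow_nodalKernel_ne_top (p : ℝ) (hp0 : 0 < p) (s : Finset ℂ) (hs : 1 < p * s.card) :
    lpPow p (nodalKernel s) ≠ ⊤ := by
  have hne : s.Nonempty := by
    rw [Finset.nonempty_iff_ne_empty]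
    rintro rfl
    norm_num at hs
  have h := ((isBigO_nodalKernel s hne).norm_left).rpow hp0.le
    (Eventually.of_forall fun n => by positivity)
  have hsum : Summable fun n : ℤ => ‖nodalKernel s n‖ ^ p := by
    refine summable_of_isBigO (Real.summable_abs_int_rpow hs) (h.congr_right fun n => ?_)
    rw [← Real.rpow_natCast, ← Real.rpow_mul (by positivity), Real.inv_rpow (abs_nonneg _),
      Real.rpow_neg (abs_nonneg _), mul_comm]
  have := hsum.tsum_ofReal_ne_top
  unfold lpPow
  convert this using 3 with n
  rw [← ENNReal.ofReal_rpow_of_nonneg (norm_nonneg _) hp0.le, ofReal_norm]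

/-! ### Comparison of two transforms -/

lemma nodalKernel_convolution (s : Finset ℂ) (a : ℤ → ℂ) (ha : Summable fun k => ‖a k‖) (m : ℤ) :
    ∑' k, a k * nodalKernel s (m - k) =
      ∑ z ∈ s, Lagrange.nodalWeight s id z * shiftedHilbert z a m := by
  simp only [nodalKernel, shiftedHilbert, Finset.mul_sum, ← tsum_mul_left]
  rw [← Summable.tsum_finsetSum fun z _ => (summable_shiftedHilbert z a ha m).mul_left _]
  congr 1
  ext k
  exact Finset.sum_congr rfl fun z _ => by ring

/-- Solving `∑ z ∈ s, w_z T_z a = K * a` for `T_x a`. -/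
lemma exists_lpPow_le_sum (p : ℝ) (hp0 : 0 < p) (hp1 : p ≤ 1) (s : Finset ℂ)
    (hs : 1 < p * s.card) (x : ℂ) (hx : x ∈ s) :
    ∃ (D : ℝ≥0∞) (e : ℂ → ℝ≥0∞), D ≠ ⊤ ∧ (∀ z, e z ≠ ⊤) ∧ ∀ a : ℤ → ℂ, lpPow p a ≠ ⊤ →
      lpPow p (shiftedHilbert x a) ≤
        D * lpPow p a + ∑ z ∈ s.erase x, e z * lpPow p (shiftedHilbert z a) := by
  set w := Lagrange.nodalWeight s id with hw
  have hwx : w x ≠ 0 := Lagrange.nodalWeight_ne_zero (Set.injOn_id _) hx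
  refine ⟨‖(w x)⁻¹‖ₑ ^ p * lpPow p (nodalKernel s), fun z => ‖-((w x)⁻¹ * w z)‖ₑ ^ p,
    ENNReal.mul_ne_top (by simp [hp0.le]) (lpPow_nodalKernel_ne_top p hp0 s hs),
    fun z => ENNReal.rpow_ne_top_of_nonneg hp0.le enorm_ne_top, fun a ha => ?_⟩
  have hsum := summable_of_lpPow_ne_top p hp0 hp1 a ha
  set G : ℤ → ℂ := fun m => ∑' k, a k * nodalKernel s (m - k) with hG
  have key : ∀ m, shiftedHilbert x a m =
      (w x)⁻¹ * G m + ∑ z ∈ s.erase x, -((w x)⁻¹ * w z) * shiftedHilbert z a m := fun m => by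
    rw [hG]
    simp only
    rw [nodalKernel_convolution s a hsum m, ← Finset.add_sum_erase s _ hx, ← hw, mul_add,
      inv_mul_cancel_left₀ hwx, Finset.mul_sum, add_assoc, ← Finset.sum_add_distrib,
      Finset.sum_eq_zero, add_zero]
    intro z _
    ring
  calc lpPow p (shiftedHilbert x a)
      ≤ ∑' m, (‖(w x)⁻¹‖ₑ ^ p * ‖G m‖ₑ ^ p +
          ∑ z ∈ s.erase x, ‖-((w x)⁻¹ * w z)‖ₑ ^ p * ‖shiftedHilbert z a m‖ₑ ^ p) := by
        refine ENNReal.tsum_le_tsum fun m => ?_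
        rw [key m]
        simp_rw [← ENNReal.mul_rpow_of_nonneg _ _ hp0.le, ← enorm_mul]
        refine (ENNReal.rpow_le_rpow (enorm_add_le _ _) hp0.le).trans
          ((ENNReal.rpow_add_le_add_rpow _ _ hp0.le hp1).trans ?_)
        gcongr
        exact (ENNReal.rpow_le_rpow (enorm_sum_le _ _) hp0.le).trans
          (rpow_finset_sum_le p hp0 hp1 _ _)
    _ = ‖(w x)⁻¹‖ₑ ^ p * lpPow p G +
          ∑ z ∈ s.erase x, ‖-((w x)⁻¹ * w z)‖ₑ ^ p * lpPow p (shiftedHilbert z a) := by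
        rw [ENNReal.tsum_add, ENNReal.tsum_mul_left,
          Summable.tsum_finsetSum fun _ _ => ENNReal.summable]
        simp_rw [ENNReal.tsum_mul_left]
        rfl
    _ ≤ _ := by
        rw [mul_assoc]
        gcongr
        exact lpPow_convolution_le p hp0 hp1 a _

lemma exists_lpPow_le (p : ℝ) (hp0 : 0 < p) (hp1 : p ≤ 1) (x y : ℂ) (hxy : ∀ j : ℕ, x ≠ y + j) :
    ∃ D : ℝ≥0∞, D ≠ ⊤ ∧ ∀ a : ℤ → ℂ, lpPow p a ≠ ⊤ →
      lpPow p (shiftedHilbert x a) ≤ D * (lpPow p a + lpPow p (shiftedHilbert y a)) := by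
  obtain ⟨N, hN⟩ := exists_nat_gt (1 / p)
  set t : Finset ℂ := (Finset.range N).image fun j : ℕ => y + j with ht
  have hxt : x ∉ t := by
    simp only [ht, Finset.mem_image, not_exists, not_and]
    exact fun j _ h => hxy j h.symm
  have hcard : (insert x t).card = N + 1 := by
    rw [Finset.card_insert_of_notMem hxt, ht, Finset.card_image_of_injective, Finset.card_range]
    intro i j h
    simpa using h
  have hp : 1 < p * (insert x t).card := by
    rw [hcard]
    rw [div_lt_iff₀ hp0] at hN
    push_cast
    linarith
  obtain ⟨D, e, hD, he, h⟩ :=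
    exists_lpPow_le_sum p hp0 hp1 (insert x t) hp x (Finset.mem_insert_self _ _)
  refine ⟨D + ∑ z ∈ t, e z, ENNReal.add_ne_top.2 ⟨hD, ENNReal.sum_ne_top.2 fun z _ => he z⟩,
    fun a ha => (h a ha).trans ?_⟩
  rw [Finset.erase_insert hxt, add_mul, Finset.sum_mul]
  gcongr with z hz
  · exact le_self_add
  · obtain ⟨j, _, rfl⟩ := Finset.mem_image.1 hz
    have := lpPow_shiftedHilbert_add_int p y j a
    rw [Int.cast_natCast] at this
    rw [this]
    exact le_add_self

lemma exists_hpNorm_le (p : ℝ) (hp0 : 0 < p) (hp1 : p ≤ 1) (x y : ℂ)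
    (hxy : ∀ j : ℕ, x ≠ y + j) :
    ∃ C : ℝ, 0 < C ∧ ∀ a : ℤ → ℂ, lpPow p a ≠ ⊤ →
      ellpNorm p a + ellpNorm p (shiftedHilbert x a) ≤
        ENNReal.ofReal C * (ellpNorm p a + ellpNorm p (shiftedHilbert y a)) := by
  obtain ⟨D, hD, h⟩ := exists_lpPow_le p hp0 hp1 x y hxy
  have hq : 1 ≤ 1 / p := by rwa [one_le_div hp0]
  have hq0 : 0 ≤ 1 / p := zero_le_one.trans hq
  set B : ℝ≥0∞ := 1 + D ^ (1 / p) * 2 ^ (1 / p - 1) with hB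
  have hBt : B ≠ ⊤ := ENNReal.add_ne_top.2 ⟨ENNReal.one_ne_top, ENNReal.mul_ne_top
    (ENNReal.rpow_ne_top_of_nonneg hq0 hD)
    (ENNReal.rpow_ne_top_of_nonneg (by linarith) (by simp))⟩
  have hB1 : B ≠ 0 := by simp [hB]
  refine ⟨B.toReal, ENNReal.toReal_pos hB1 hBt, fun a ha => ?_⟩
  rw [ENNReal.ofReal_toReal hBt]
  simp only [ellpNorm_eq p hp0]
  calc lpPow p a ^ (1 / p) + lpPow p (shiftedHilbert x a) ^ (1 / p)
      ≤ lpPow p a ^ (1 / p) +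
          (D * (lpPow p a + lpPow p (shiftedHilbert y a))) ^ (1 / p) := by
        gcongr
        exact h a ha
    _ ≤ (lpPow p a ^ (1 / p) + lpPow p (shiftedHilbert y a) ^ (1 / p)) +
          D ^ (1 / p) * (2 ^ (1 / p - 1) *
            (lpPow p a ^ (1 / p) + lpPow p (shiftedHilbert y a) ^ (1 / p))) := by
        rw [ENNReal.mul_rpow_of_nonneg _ _ hq0]
        gcongr
        · exact le_self_add
        · exact ENNReal.rpow_add_le_mul_rpow_add_rpow _ _ hq
    _ = _ := by rw [hB]; ring

theorem hp_norms_equivalent (p : ℝ) (hp0 : 0 < p) (hp1 : p ≤ 1) :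
    ∃ c C : ℝ, 0 < c ∧ 0 < C ∧
      ∀ a : ℤ → ℂ, Summable (fun k : ℤ => ‖a k‖ ^ p) →
        (hpNorm p a ≠ ⊤ ↔ hpNormStar p a ≠ ⊤) ∧
        ENNReal.ofReal c * hpNorm p a ≤ hpNormStar p a ∧
        hpNormStar p a ≤ ENNReal.ofReal C * hpNorm p a := by
  obtain ⟨C₁, hC₁, h₁⟩ := exists_hpNorm_le p hp0 hp1 0 (-1 / 2) fun j h => by
    have h2 : (((2 * j : ℕ) : ℤ) : ℂ) = ((1 : ℤ) : ℂ) := by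
      push_cast
      linear_combination -2 * h
    have := Int.cast_injective h2
    omega
  obtain ⟨C₂, hC₂, h₂⟩ := exists_hpNorm_le p hp0 hp1 (-1 / 2) 0 fun j h => by
    have h2 : (((2 * j : ℕ) : ℤ) : ℂ) = ((-1 : ℤ) : ℂ) := by
      push_cast
      linear_combination -2 * h
    have := Int.cast_injective h2
    omega
  refine ⟨C₁⁻¹, C₂, inv_pos.2 hC₁, hC₂, fun a ha => ?_⟩
  have hat : lpPow p a ≠ ⊤ := by
    have := ha.tsum_ofReal_ne_top
    unfold lpPow
    convert this using 3 with n
    rw [← ENNReal.ofReal_rpow_of_nonneg (norm_nonneg _) hp0.le, ofReal_norm]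
  have k₁ : hpNorm p a ≤ ENNReal.ofReal C₁ * hpNormStar p a := by
    rw [hpNorm, hpNormStar, discHilbert_eq, discHilbertC_eq]
    exact h₁ a hat
  have k₂ : hpNormStar p a ≤ ENNReal.ofReal C₂ * hpNorm p a := by
    rw [hpNorm, hpNormStar, discHilbert_eq, discHilbertC_eq]
    exact h₂ a hat
  refine ⟨⟨fun h => ne_top_of_le_ne_top (ENNReal.mul_ne_top ENNReal.ofReal_ne_top h) k₂,
    fun h => ne_top_of_le_ne_top (ENNReal.mul_ne_top ENNReal.ofReal_ne_top h) k₁⟩, ?_, k₂⟩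
  calc ENNReal.ofReal C₁⁻¹ * hpNorm p a
      ≤ ENNReal.ofReal C₁⁻¹ * (ENNReal.ofReal C₁ * hpNormStar p a) := by gcongr
    _ = hpNormStar p a := by
        rw [← mul_assoc, ← ENNReal.ofReal_mul (inv_pos.2 hC₁).le, inv_mul_cancel₀ hC₁.ne',
          ENNReal.ofReal_one, one_mul]
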